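/- Any two complete Bergman games starting from the same initial state S contain exactly the same number of combine moves; equivalently, the number of combine moves in a complete game from S equals ∑_i S i minus the chip count of its terminal state, and this quantity is the same for all complete games from S. -/

import Mathlib

noncomputable section

/-- The golden ratio. -/
def phi : ℝ := (1 + Real.sqrt 5) / 2

/-- Base-φ logarithm. -/
def logphi (x : ℝ) : ℝ := Real.logb phi x

/-- A Bergman state: a finitely supported function from ℤ to ℕ. -/
abbrev BState := ℤ →₀ ℕ

/-- A split move at index `i`. -/
def SplitAt (S S' : BState) (i : ℤ) : Prop :=
  2 ≤ S i ∧
    S' = S - Finsupp.single i 2 + Finsupp.single (i + 1) 1 + Finsupp.single (i - 2) 1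

/-- A combine move at index `i`. -/
def CombineAt (S S' : BState) (i : ℤ) : Prop :=
  1 ≤ S i ∧ 1 ≤ S (i + 1) ∧
    S' = S - Finsupp.single i 1 - Finsupp.single (i + 1) 1 + Finsupp.single (i + 2) 1

/-- A move is a split or a combine. -/
def Move (S S' : BState) : Prop := (∃ i, SplitAt S S' i) ∨ (∃ i, CombineAt S S' i)

/-- Terminal state: no move is legal. -/
def Terminal (S : BState) : Prop :=
  (∀ i, S i ≤ 1) ∧ ∀ i, ¬(1 ≤ S i ∧ 1 ≤ S (i + 1))

/-- A Bergman game of length `m` from `S`. -/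
def Game (S : BState) (m : ℕ) (g : ℕ → BState) : Prop :=
  g 0 = S ∧ ∀ j < m, Move (g j) (g (j + 1))

/-- A complete Bergman game of length `m` from `S`. -/
def CompleteGame (S : BState) (m : ℕ) (g : ℕ → BState) : Prop :=
  Game S m g ∧ Terminal (g m)

/-- Reachability by a finite sequence of moves. -/
def Reachable : BState → BState → Prop := Relation.ReflTransGen Move

/-- Reachability by split moves only. -/
def SplitReachable : BState → BState → Prop :=
  Relation.ReflTransGen fun S S' => ∃ i, SplitAt S S' i

/-- The initial state `₀(n)`: `n` chips at index 0. -/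
def initState (n : ℕ) : BState := Finsupp.single 0 n

/-- Total number of chips in a state. -/
def chips (S : BState) : ℕ := S.sum fun _ c => c

open Classical in
/-- The number of split moves among the first `m` steps of `g`. -/
def splitCount (g : ℕ → BState) (m : ℕ) : ℕ :=
  ((Finset.range m).filter fun j => ∃ i, SplitAt (g j) (g (j + 1)) i).card

open Classical in
/-- The number of combine moves among the first `m` steps of `g`. -/
def combineCount (g : ℕ → BState) (m : ℕ) : ℕ :=
  ((Finset.range m).filter fun j => ∃ i, CombineAt (g j) (g (j + 1)) i).card


theorem phi_sq : phi ^ 2 = phi + 1 := by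
  unfold phi
  have := Real.sq_sqrt (show (0:ℝ) ≤ 5 by norm_num)
  nlinarith

theorem phi_gt_one : 1 < phi := by
  unfold phi
  have : (1:ℝ) < Real.sqrt 5 := by
    rw [Real.lt_sqrt] <;> norm_num
  linarith

theorem phi_pos : 0 < phi := lt_trans one_pos phi_gt_one

theorem phi_rec (i : ℤ) : phi ^ (i + 2) = phi ^ (i + 1) + phi ^ i := by
  have h := phi_pos.ne'
  rw [zpow_add₀ h, zpow_add₀ h, zpow_one, show phi ^ (2:ℤ) = phi ^ 2 from by norm_cast, phi_sq]
  ring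

/-- Value of a state. -/
def bval (S : BState) : ℝ := S.sum fun i c => (c : ℝ) * phi ^ i

theorem bval_add (S T : BState) : bval (S + T) = bval S + bval T := by
  unfold bval
  apply Finsupp.sum_add_index'
  · intro i; simp
  · intro i a b; push_cast; ring

theorem bval_single (i : ℤ) (n : ℕ) : bval (Finsupp.single i n) = n * phi ^ i := by
  unfold bval
  rw [Finsupp.sum_single_index]; simp

theorem chips_add (S T : BState) : chips (S + T) = chips S + chips T := by
  unfold chips
  apply Finsupp.sum_add_index'
  · intro i; simp
  · intro i a b; simp

theorem chips_single (i : ℤ) (n : ℕ) : chips (Finsupp.single i n) = n := by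
  unfold chips
  rw [Finsupp.sum_single_index]; simp

theorem split_inv {S S' : BState} {i : ℤ} (h : SplitAt S S' i) :
    bval S' = bval S ∧ chips S' = chips S := by
  obtain ⟨h, rfl⟩ := h
  have e : S = (S - Finsupp.single i 2) + Finsupp.single i 2 := by
    ext j
    by_cases hj : i = j
    · subst hj; simp; omega
    · simp [Finsupp.single_apply, hj]
  have hv := congrArg bval e
  have hc := congrArg chips e
  simp only [bval_add, bval_single, chips_add, chips_single] at *
  constructor
  · rw [hv]
    have h1 := phi_rec (i - 1)
    have h2 := phi_rec (i - 2)
    rw [show i - 1 + 2 = i + 1 by ring, show i - 1 + 1 = i by ring] at h1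
    rw [show i - 2 + 2 = i by ring, show i - 2 + 1 = i - 1 by ring] at h2
    push_cast
    linarith
  · omega

theorem combine_inv {S S' : BState} {i : ℤ} (h : CombineAt S S' i) :
    bval S' = bval S ∧ chips S' + 1 = chips S := by
  obtain ⟨h, h', rfl⟩ := h
  have e : S = (S - Finsupp.single i 1 - Finsupp.single (i + 1) 1) + Finsupp.single (i + 1) 1
      + Finsupp.single i 1 := by
    ext j
    by_cases hj : i = j
    · subst hj; simp; omega
    · by_cases hj' : i + 1 = j
      · subst hj'; simp; omega
      · simp [Finsupp.single_apply, hj, hj']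
  have hv := congrArg bval e
  have hc := congrArg chips e
  simp only [bval_add, bval_single, chips_add, chips_single] at *
  constructor
  · rw [hv]
    have h1 := phi_rec i
    push_cast
    linarith
  · omega

theorem game_inv {S : BState} {m : ℕ} {g : ℕ → BState} (h : Game S m g) :
    bval (g m) = bval S ∧ chips (g m) + combineCount g m = chips S := by
  induction m with
  | zero => simp [combineCount, h.1]
  | succ k ih =>
    obtain ⟨i1, i2⟩ := ih ⟨h.1, fun j hj => h.2 j (by omega)⟩
    have hm := h.2 k (by omega)
    by_cases hc : ∃ i, CombineAt (g k) (g (k + 1)) i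
    · have e : combineCount g (k + 1) = combineCount g k + 1 := by
        unfold combineCount
        rw [Finset.range_add_one, Finset.filter_insert, if_pos hc, Finset.card_insert_of_notMem]
        simp
      obtain ⟨i, hi⟩ := hc
      obtain ⟨a, b⟩ := combine_inv hi
      exact ⟨a.trans i1, by omega⟩
    · have e : combineCount g (k + 1) = combineCount g k := by
        unfold combineCount
        rw [Finset.range_add_one, Finset.filter_insert, if_neg hc]
      obtain ⟨i, hi⟩ := hm.resolve_right hc
      obtain ⟨a, b⟩ := split_inv hi
      exact ⟨a.trans i1, by omega⟩

theorem sum_lt (A : Finset ℤ) : (∀ i ∈ A, i + 1 ∉ A) → ∀ k, (∀ i ∈ A, i < k) →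
    ∑ i ∈ A, phi ^ i < phi ^ k := by
  induction A using Finset.induction_on_max with
  | empty => intro _ k _; simpa using zpow_pos phi_pos k
  | insert a A hA ih =>
    intro h k hk
    have ha : a ∉ A := fun h => lt_irrefl _ (hA a h)
    rw [Finset.sum_insert ha]
    have h1 := ih (fun i hi hi' => h i (Finset.mem_insert_of_mem hi) (Finset.mem_insert_of_mem hi'))
      (a - 1) (fun i hi => by
        have := hA i hi
        have h3 : i + 1 ≠ a := fun h3 =>
          h i (Finset.mem_insert_of_mem hi) (h3 ▸ Finset.mem_insert_self _ _)
        omega)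
    have h2 := phi_rec (a - 1)
    rw [show a - 1 + 2 = a + 1 by ring, show a - 1 + 1 = a by ring] at h2
    have h3 : phi ^ (a + 1) ≤ phi ^ k :=
      zpow_le_zpow_right₀ phi_gt_one.le (hk a (Finset.mem_insert_self _ _))
    linarith

theorem disj_aux (A B : Finset ℤ) (hA : ∀ i ∈ A, i + 1 ∉ A) (hB : ∀ i ∈ B, i + 1 ∉ B)
    (hd : Disjoint A B) (hs : ∑ i ∈ A, phi ^ i = ∑ i ∈ B, phi ^ i) : A = ∅ ∧ B = ∅ := by
  have pos : ∀ C : Finset ℤ, C.Nonempty → 0 < ∑ i ∈ C, phi ^ i := fun C hC =>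
    Finset.sum_pos (fun i _ => zpow_pos phi_pos i) hC
  have key : ∀ A B : Finset ℤ, (∀ i ∈ A, i + 1 ∉ A) → ∀ b ∈ B, (∀ i ∈ A, i < b) →
      ∑ i ∈ A, phi ^ i ≠ ∑ i ∈ B, phi ^ i := by
    intro A B hA b hb hlt
    have h1 := sum_lt A hA b hlt
    have h2 := Finset.single_le_sum (f := fun i : ℤ => phi ^ i)
      (fun i _ => (zpow_pos phi_pos i).le) hb
    exact (lt_of_lt_of_le h1 h2).ne
  rcases A.eq_empty_or_nonempty with rfl | nA
  · rcases B.eq_empty_or_nonempty with rfl | nB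
    · simp
    · have := pos B nB
      simp at hs; linarith
  · rcases B.eq_empty_or_nonempty with rfl | nB
    · have := pos A nA
      simp at hs; linarith
    · exfalso
      have mA := A.max'_mem nA
      have mB := B.max'_mem nB
      rcases lt_trichotomy (A.max' nA) (B.max' nB) with h | h | h
      · exact key A B hA _ mB (fun i hi => lt_of_le_of_lt (A.le_max' i hi) h) hs
      · exact Finset.disjoint_left.mp hd mA (h ▸ mB)
      · exact key B A hB _ mA (fun i hi => lt_of_le_of_lt (B.le_max' i hi) h) hs.symm

theorem uniq_aux (A B : Finset ℤ) (hA : ∀ i ∈ A, i + 1 ∉ A) (hB : ∀ i ∈ B, i + 1 ∉ B)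
    (hs : ∑ i ∈ A, phi ^ i = ∑ i ∈ B, phi ^ i) : A = B := by
  have h1 := Finset.sum_inter_add_sum_sdiff A B (fun i : ℤ => phi ^ i)
  have h2 := Finset.sum_inter_add_sum_sdiff B A (fun i : ℤ => phi ^ i)
  rw [Finset.inter_comm] at h2
  obtain ⟨a, b⟩ := disj_aux (A \ B) (B \ A)
    (fun i hi hi' => hA i (Finset.mem_sdiff.mp hi).1 (Finset.mem_sdiff.mp hi').1)
    (fun i hi hi' => hB i (Finset.mem_sdiff.mp hi).1 (Finset.mem_sdiff.mp hi').1)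
    disjoint_sdiff_sdiff (by linarith)
  exact Finset.Subset.antisymm (Finset.sdiff_eq_empty_iff_subset.mp a)
    (Finset.sdiff_eq_empty_iff_subset.mp b)

theorem term_facts {T : BState} (h : Terminal T) :
    (∀ i ∈ T.support, i + 1 ∉ T.support) ∧ bval T = ∑ i ∈ T.support, phi ^ i ∧
      chips T = T.support.card := by
  have one : ∀ i ∈ T.support, T i = 1 := fun i hi => by
    have := h.1 i
    have := Finsupp.mem_support_iff.mp hi
    omega
  refine ⟨fun i hi hi' => h.2 i ⟨(one _ hi).ge, (one _ hi').ge⟩, ?_, ?_⟩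
  · unfold bval Finsupp.sum
    exact Finset.sum_congr rfl fun i hi => by simp [one i hi]
  · unfold chips Finsupp.sum
    rw [Finset.sum_congr rfl one]; simp

/-- Any two complete Bergman games from the same initial state contain the same number of
combine moves, namely the chip count of `S` minus the chip count of the terminal state. -/
theorem bergman_combine_count_invariant (S : BState)
    (m₁ : ℕ) (g₁ : ℕ → BState) (h₁ : CompleteGame S m₁ g₁)
    (m₂ : ℕ) (g₂ : ℕ → BState) (h₂ : CompleteGame S m₂ g₂) :
    combineCount g₁ m₁ = combineCount g₂ m₂ ∧
      combineCount g₁ m₁ = chips S - chips (g₁ m₁) ∧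
      combineCount g₂ m₂ = chips S - chips (g₂ m₂) := by
  obtain ⟨a1, b1⟩ := game_inv h₁.1
  obtain ⟨a2, b2⟩ := game_inv h₂.1
  obtain ⟨x1, y1, z1⟩ := term_facts h₁.2
  obtain ⟨x2, y2, z2⟩ := term_facts h₂.2
  have e := uniq_aux _ _ x1 x2 (by rw [← y1, ← y2, a1, a2])
  rw [e] at z1
  omega
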